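/- arXiv:2309.10529 — 2 statements merged into one kernel-verified Lean document; each statement's English description precedes it below -/
import Mathlib

section
/- For any real numbers b, c > 1, the two sets { x ∈ (0,1) irrational : a_n(x) ≥ c^{b^n} for infinitely many n ∈ ℕ } and { x ∈ (0,1) irrational : a_n(x) ≥ c^{b^n} for all n ≥ 1 } have the same Hausdorff dimension, equal to 1/(b+1). -/
open Filter MeasureTheory Set

/-- The Gauss map `T(x) = 1/x - ⌊1/x⌋`. -/
noncomputable def gaussMap (x : ℝ) : ℝ := 1 / x - (⌊1 / x⌋ : ℤ)

/-- The `n`-th partial quotient `a_n(x)` (for `n ≥ 1`) of the continued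
fraction expansion of `x`: `a_n(x) = ⌊1 / T^{n-1}(x)⌋`. -/
noncomputable def pq (x : ℝ) (n : ℕ) : ℕ := ⌊1 / (gaussMap^[n - 1] x)⌋₊

/-- The continuant `q_n(a_1, …, a_n)`: `q_0 = 1`, `q_1 = a_1`,
`q_k = a_k q_{k-1} + q_{k-2}`. -/
def contQ : (n : ℕ) → (Fin n → ℕ) → ℕ
  | 0, _ => 1
  | 1, a => a 0
  | (n + 2), a =>
      a (Fin.last (n + 1)) * contQ (n + 1) (Fin.init a) +
        contQ n (Fin.init (Fin.init a))

/-- `s_B`: the Wang–Wu pressure exponent. -/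
noncomputable def sExp (B : ℝ) : ℝ :=
  sInf {s : ℝ | 0 ≤ s ∧
    Filter.atTop.limsup (fun n : ℕ =>
      (((n : ℝ)⁻¹ : ℝ) : EReal) * ENNReal.log (∑' a : Fin n → ℕ+,
        ENNReal.ofReal ((B ^ n * ((contQ n fun i => (a i : ℕ)) : ℝ) ^ 2) ^ (-s)))) ≤ 0}

/-- `g_{B₁,B₂}`: the two-parameter pressure exponent. -/
noncomputable def gExp (B₁ B₂ : ℝ) : ℝ :=
  sInf {s : ℝ | 0 ≤ s ∧
    Filter.atTop.limsup (fun n : ℕ =>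
      (((n : ℝ)⁻¹ : ℝ) : EReal) * ENNReal.log (∑' a : Fin n → ℕ+,
        ENNReal.ofReal (B₂ ^ ((1 - s) * (n : ℝ)) *
          (B₁ ^ n * ((contQ n fun i => (a i : ℕ)) : ℝ) ^ 2) ^ (-s)))) ≤ 0}

/-!
Upper bound. If `a_n ≥ c ^ (b ^ n)` infinitely often and `1 < β < b`, then
`u_n = log (a_1 ⋯ a_n) / β ^ n` is unbounded, so that `u_{n+1} ≥ max (u_n, 1)` for infinitely
many `n`. For such an `n`, the product `a_1 ⋯ a_{n+1}` is at least
`E = max ((a_1 ⋯ a_n) ^ β, exp (β ^ (n + 1)))`. For each word `a_1, …, a_n`, the points with this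
property form a set of diameter at most `1 / (a_1 ⋯ a_n * E)`. When `s * (b + 1) > 1` and `β` is
close to `b`, the sum of the `s`-th powers of these diameters over all words is finite, so the
dimension is at most `s`.

Lower bound. Put `M_n = ⌈c ^ (b ^ n)⌉` and let `d_n < M_n` be the digits of `t ∈ [0, 1)` in its
Cantor series with bases `M_n`. The point `x` with `a_n = M_n + d_n` satisfies `a_n ≥ c ^ (b ^ n)`
for all `n`, and when `s * (b + 1) < 1` the map `x ↦ t` is `s`-Hölder onto `[0, 1)`.
-/

open scoped ENNReal NNReal Topology

section Growth

lemma bddAbove_range_mul_sub_mul_pow {b : ℝ} (hb : 1 < b) (A : ℝ) {B : ℝ} (hB : 0 < B) :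
    BddAbove (range fun n : ℕ => A * n - B * b ^ n) := by
  have hlim : Tendsto (fun n : ℕ => A * ((n : ℝ) ^ 1 / b ^ n) - B) atTop (𝓝 (-B)) := by
    simpa using ((tendsto_pow_const_div_const_pow_of_one_lt 1 hb).const_mul A).sub_const B
  refine bddAbove_range_of_tendsto_atTop_atBot
    ((hlim.neg_mul_atTop (neg_neg_of_pos hB) (tendsto_pow_atTop_atTop_of_one_lt hb)).congr
      fun n => ?_)
  have : b ^ n ≠ 0 := by positivity
  field_simp

lemma summable_exp_mul_sub_mul_pow {b : ℝ} (hb : 1 < b) (A : ℝ) {B : ℝ} (hB : 0 < B) :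
    Summable fun n : ℕ => Real.exp (A * n - B * b ^ n) := by
  obtain ⟨K, hK⟩ := bddAbove_range_mul_sub_mul_pow hb (A + 1) hB
  refine .of_nonneg_of_le (fun n => (Real.exp_pos _).le) (fun n => ?_)
    (Real.summable_exp_neg_nat.mul_left (Real.exp K))
  rw [← Real.exp_add, Real.exp_le_exp]
  linarith [hK (mem_range_self n)]

lemma frequently_le_succ_and_le_of_not_bddAbove {α : Type*} [LinearOrder α] {u : ℕ → α}
    (hu : ¬ BddAbove (range u)) (K : α) :
    ∃ᶠ n in atTop, u n ≤ u (n + 1) ∧ K ≤ u (n + 1) := by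
  by_contra hcon
  obtain ⟨N, hN⟩ := eventually_atTop.mp (not_frequently.mp hcon)
  have hbound : ∀ n ≥ N, u n ≤ max (u N) K := by
    intro n hn
    induction n, hn using Nat.le_induction with
    | base => exact le_max_left _ _
    | succ n hn ih =>
      rcases le_or_gt (u n) (u (n + 1)) with h | h
      · exact (not_le.mp fun hK => hN n hn ⟨h, hK⟩).le.trans (le_max_right _ _)
      · exact h.le.trans ih
  exact hu (IsBoundedUnder.bddAbove_range ⟨_, eventually_atTop.mpr ⟨N, hbound⟩⟩)

end Growth

section HausdorffDimension

lemma hausdorffMeasure_eq_zero_of_tsum_ediam_rpow_ne_top {X ι : Type*} [EMetricSpace X]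
    [MeasurableSpace X] [BorelSpace X] [Countable ι] {U : ι → Set X} {S : Set X} {s : ℝ}
    (hs : 0 < s) (hsum : ∑' i, Metric.ediam (U i) ^ s ≠ ∞)
    (hS : ∀ x ∈ S, {i | x ∈ U i}.Infinite) : μH[s] S = 0 := by
  set tail : Finset ι → ℝ≥0∞ := fun F => ∑' i : {i // i ∉ F}, Metric.ediam (U i) ^ s
  have htail : Tendsto tail atTop (𝓝 0) := ENNReal.tendsto_tsum_compl_atTop_zero hsum
  have hdiam : Tendsto (fun F => tail F ^ s⁻¹) atTop (𝓝 0) := by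
    simpa [ENNReal.zero_rpow_of_pos (inv_pos.mpr hs)] using htail.ennrpow_const s⁻¹
  have hle : μH[s] S ≤ liminf tail atTop := by
    refine Measure.hausdorffMeasure_le_liminf_tsum s S (fun F => tail F ^ s⁻¹) hdiam
      (fun F (i : {i // i ∉ F}) => U i) (.of_forall fun F i => ?_) (.of_forall fun F x hx => ?_)
    · exact (ENNReal.le_rpow_inv_iff hs).mpr
        (ENNReal.le_tsum (f := fun i : {i // i ∉ F} => Metric.ediam (U i) ^ s) i)
    · obtain ⟨i, hi, hiF⟩ := (hS x hx).exists_notMem_finset F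
      exact mem_iUnion.mpr ⟨⟨i, hiF⟩, hi⟩
  exact le_antisymm (hle.trans_eq htail.liminf_eq) zero_le

lemma dimH_le_of_tsum_ediam_rpow_ne_top {X ι : Type*} [EMetricSpace X] [Countable ι]
    {U : ι → Set X} {S : Set X} {s : ℝ≥0} (hs : 0 < s)
    (hsum : ∑' i, Metric.ediam (U i) ^ (s : ℝ) ≠ ∞) (hS : ∀ x ∈ S, {i | x ∈ U i}.Infinite) :
    dimH S ≤ s := by
  borelize X
  refine dimH_le_of_hausdorffMeasure_ne_top ?_
  rw [hausdorffMeasure_eq_zero_of_tsum_ediam_rpow_ne_top (NNReal.coe_pos.mpr hs) hsum hS]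
  exact ENNReal.zero_ne_top

lemma mul_dimH_le_dimH_image_of_edist_le {X Y : Type*} [EMetricSpace X] [EMetricSpace Y]
    {f : X → Y} {S : Set X} {C r : ℝ≥0} (hr : 0 < r)
    (hf : ∀ x ∈ S, ∀ y ∈ S, edist x y ≤ C * edist (f x) (f y) ^ (r : ℝ)) :
    r * dimH S ≤ dimH (f '' S) := by
  rcases S.eq_empty_or_nonempty with rfl | ⟨x₀, -⟩
  · simp
  have : Nonempty X := ⟨x₀⟩
  have hinj : InjOn f S := fun x hx y hy hxy => by
    simpa [hxy, hr] using hf x hx y hy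
  have hinv : LeftInvOn (Function.invFunOn f S) f S := hinj.leftInvOn_invFunOn
  have hholder : HolderOnWith C r (Function.invFunOn f S) (f '' S) := by
    rintro _ ⟨x, hx, rfl⟩ _ ⟨y, hy, rfl⟩
    rw [hinv hx, hinv hy]
    exact hf x hx y hy
  have hdim := hholder.dimH_image_le hr
  rw [hinv.image_image] at hdim
  rw [mul_comm]
  exact (ENNReal.le_div_iff_mul_le (.inl (by simpa using hr.ne')) (.inl (by simp))).mp hdim

end HausdorffDimension

/-- `X` is the sequence of tails of a continued fraction with digits `a`: `X n` stands for
`[a n, a (n + 1), …]`, so that the recursion is `X n = 1 / (a n + X (n + 1))`. In the notation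
`x = [a₁, a₂, …]`, the digit `a n` is `aₙ₊₁` and `X n` is `Tⁿ x`. -/
structure IsContFracTails (X : ℕ → ℝ) (a : ℕ → ℕ) : Prop where
  pos : ∀ n, 0 < X n
  lt_one : ∀ n, X n < 1
  mul_add_succ : ∀ n, X n * (a n + X (n + 1)) = 1

namespace IsContFracTails

section SingleOrbit

variable {X : ℕ → ℝ} {a : ℕ → ℕ}

lemma inv_eq (h : IsContFracTails X a) (n : ℕ) : (X n)⁻¹ = a n + X (n + 1) :=
  inv_eq_of_mul_eq_one_right (h.mul_add_succ n)

lemma one_le_digit (h : IsContFracTails X a) (n : ℕ) : 1 ≤ a n := by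
  by_contra! hlt
  have hinv := h.inv_eq n
  rw [Nat.lt_one_iff.mp hlt, Nat.cast_zero, zero_add] at hinv
  linarith [(one_lt_inv₀ (h.pos n)).mpr (h.lt_one n), h.lt_one (n + 1)]

lemma le_inv_digit (h : IsContFracTails X a) (n : ℕ) : X n ≤ (a n : ℝ)⁻¹ := by
  have ha : (0 : ℝ) < a n := by exact_mod_cast h.one_le_digit n
  rw [le_inv_comm₀ (h.pos n) ha, h.inv_eq]
  linarith [h.pos (n + 1)]

lemma inv_digit_add_one_le (h : IsContFracTails X a) (n : ℕ) : (a n + 1 : ℝ)⁻¹ ≤ X n := by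
  rw [inv_le_comm₀ (by positivity) (h.pos n), h.inv_eq]
  linarith [h.lt_one (n + 1)]

lemma iterate_gaussMap (h : IsContFracTails X a) (n : ℕ) : gaussMap^[n] (X 0) = X n := by
  induction n with
  | zero => rfl
  | succ n ih =>
    have hfract : gaussMap (X n) = Int.fract (X n)⁻¹ := by rw [← one_div]; rfl
    rw [Function.iterate_succ_apply', ih, hfract, h.inv_eq, Int.fract_natCast_add,
      Int.fract_eq_self]
    exact ⟨(h.pos _).le, h.lt_one _⟩

lemma pq_succ (h : IsContFracTails X a) (n : ℕ) : pq (X 0) (n + 1) = a n := by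
  rw [pq, Nat.add_sub_cancel, h.iterate_gaussMap, one_div, h.inv_eq, add_comm,
    Nat.floor_add_natCast (h.pos _).le, Nat.floor_eq_zero.mpr (h.lt_one _), zero_add]

/-- If `X k = p / q`, then `X (k + 1) = (q - a k * p) / p` has the smaller denominator `p`. -/
lemma mul_natCast_ne_intCast (h : IsContFracTails X a) {q : ℕ} (hq : 0 < q) (k : ℕ) (p : ℤ) :
    X k * q ≠ p := by
  induction q using Nat.strong_induction_on generalizing k p with
  | _ q ih =>
    intro hp
    have hq' : (0 : ℝ) < q := by exact_mod_cast hq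
    have hp_pos : 0 < p := by exact_mod_cast hp ▸ mul_pos (h.pos k) hq'
    have hp_lt : p < q := by exact_mod_cast hp ▸ mul_lt_of_lt_one_left hq' (h.lt_one k)
    lift p to ℕ using hp_pos.le
    refine ih p (by exact_mod_cast hp_lt) (by exact_mod_cast hp_pos) (k + 1) (q - a k * p) ?_
    push_cast at hp ⊢
    rw [← hp]
    linear_combination (q : ℝ) * h.mul_add_succ k

lemma irrational (h : IsContFracTails X a) (k : ℕ) : Irrational (X k) := by
  rintro ⟨r, hr⟩
  refine h.mul_natCast_ne_intCast r.pos k r.num ?_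
  rw [← hr]
  exact_mod_cast Rat.mul_den_eq_num r

end SingleOrbit

section TwoOrbits

variable {X Y : ℕ → ℝ} {a a' : ℕ → ℕ}

lemma abs_sub_eq (h : IsContFracTails X a) (h' : IsContFracTails Y a') (n : ℕ) :
    |X n - Y n| = |((a n : ℝ) - a' n) + (X (n + 1) - Y (n + 1))| * (X n * Y n) := by
  rw [← abs_of_pos (mul_pos (h.pos n) (h'.pos n)), ← abs_mul, ← abs_neg]
  congr 1
  linear_combination -Y n * h.mul_add_succ n + X n * h'.mul_add_succ n

lemma abs_sub_eq_mul_prod (h : IsContFracTails X a) (h' : IsContFracTails Y a') {n : ℕ}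
    (heq : ∀ i < n, a i = a' i) :
    |X 0 - Y 0| = |X n - Y n| * ∏ i ∈ Finset.range n, X i * Y i := by
  induction n with
  | zero => simp
  | succ n ih =>
    rw [ih fun i hi => heq i (by lia), h.abs_sub_eq h' n, heq n (by lia), sub_self, zero_add,
      Finset.prod_range_succ]
    ring

lemma abs_sub_le_div_sq_prod (h : IsContFracTails X a) (h' : IsContFracTails Y a') {n : ℕ}
    (heq : ∀ i < n, a i = a' i) :
    |X 0 - Y 0| ≤ |X n - Y n| / (∏ i ∈ Finset.range n, (a i : ℝ)) ^ 2 := by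
  rw [h.abs_sub_eq_mul_prod h' heq, div_eq_mul_inv, ← Finset.prod_pow, ← Finset.prod_inv_distrib]
  gcongr with i hi
  · exact fun i _ => (mul_pos (h.pos i) (h'.pos i)).le
  calc X i * Y i ≤ (a i : ℝ)⁻¹ * (a' i : ℝ)⁻¹ :=
        mul_le_mul (h.le_inv_digit i) (h'.le_inv_digit i) (h'.pos i).le (by positivity)
    _ = ((a i : ℝ) ^ 2)⁻¹ := by rw [← heq i (Finset.mem_range.mp hi), sq, mul_inv]

lemma abs_digit_sub_mul_prod_le (h : IsContFracTails X a) (h' : IsContFracTails Y a') {n : ℕ}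
    (heq : ∀ i < n, a i = a' i) (ha : 2 ≤ a (n + 1)) (ha' : 2 ≤ a' (n + 1)) :
    |(a n : ℝ) - a' n| * ∏ i ∈ Finset.range (n + 1), X i * Y i ≤ 2 * |X 0 - Y 0| := by
  rcases eq_or_ne (a n) (a' n) with hn | hn
  · simp [hn]
  have hle_half : ∀ {Z : ℕ → ℝ} {d : ℕ → ℕ}, IsContFracTails Z d → 2 ≤ d (n + 1) →
      Z (n + 1) ≤ 1 / 2 := fun {Z d} hZ hd => by
    have hd' : (2 : ℝ) ≤ d (n + 1) := by exact_mod_cast hd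
    exact (hZ.le_inv_digit _).trans (by rw [← one_div]; gcongr)
  have htail : |X (n + 1) - Y (n + 1)| ≤ 1 / 2 :=
    abs_sub_le_of_nonneg_of_le (h.pos _).le (hle_half h ha) (h'.pos _).le (hle_half h' ha')
  have hdigit : 1 ≤ |(a n : ℝ) - a' n| := by
    exact_mod_cast Int.one_le_abs (sub_ne_zero.mpr (Nat.cast_injective.ne hn))
  have hhalf : |(a n : ℝ) - a' n| ≤
      2 * |((a n : ℝ) - a' n) + (X (n + 1) - Y (n + 1))| := by
    linarith [abs_sub_abs_le_abs_add ((a n : ℝ) - a' n) (X (n + 1) - Y (n + 1))]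
  have hprod : 0 ≤ ∏ i ∈ Finset.range (n + 1), X i * Y i :=
    Finset.prod_nonneg fun i _ => (mul_pos (h.pos i) (h'.pos i)).le
  calc |(a n : ℝ) - a' n| * ∏ i ∈ Finset.range (n + 1), X i * Y i
      ≤ 2 * |((a n : ℝ) - a' n) + (X (n + 1) - Y (n + 1))| *
          ∏ i ∈ Finset.range (n + 1), X i * Y i := by gcongr
    _ = 2 * |X 0 - Y 0| := by
        rw [h.abs_sub_eq_mul_prod h' heq, h.abs_sub_eq h' n, Finset.prod_range_succ]
        ring

end TwoOrbits

end IsContFracTails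

lemma gaussMap_mem_Ioo {x : ℝ} (hx : Irrational x) : gaussMap x ∈ Ioo (0 : ℝ) 1 := by
  have hfract : Int.fract (1 / x) ≠ 0 := by
    rw [one_div, Int.fract, sub_ne_zero]
    exact hx.inv.ne_int _
  exact ⟨(Int.fract_nonneg _).lt_of_ne' hfract, Int.fract_lt_one _⟩

lemma irrational_gaussMap {x : ℝ} (hx : Irrational x) : Irrational (gaussMap x) := by
  rw [gaussMap, one_div]
  exact hx.inv.sub_intCast _

lemma isContFracTails_iterate_gaussMap {x : ℝ} (hx : x ∈ Ioo (0 : ℝ) 1) (hirr : Irrational x) :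
    IsContFracTails (fun n => gaussMap^[n] x) fun n => pq x (n + 1) := by
  have hirr_iter : ∀ n, Irrational (gaussMap^[n] x) := fun n => by
    induction n with
    | zero => exact hirr
    | succ n ih => rw [Function.iterate_succ_apply']; exact irrational_gaussMap ih
  have hmem : ∀ n, gaussMap^[n] x ∈ Ioo (0 : ℝ) 1 := by
    rintro (_ | n)
    · exact hx
    · rw [Function.iterate_succ_apply']
      exact gaussMap_mem_Ioo (hirr_iter n)
  refine ⟨fun n => (hmem n).1, fun n => (hmem n).2, fun n => ?_⟩
  have hpos := (hmem n).1
  rw [Function.iterate_succ_apply', pq, Nat.add_sub_cancel, gaussMap,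
    natCast_floor_eq_intCast_floor (one_div_pos.mpr hpos).le, add_sub_cancel,
    mul_one_div_cancel hpos.ne']

lemma exists_finite_contFracTails {a : ℕ → ℕ} (ha : ∀ n, 1 ≤ a n) (n : ℕ) :
    ∃ X : ℕ → ℝ, (∀ k, X k ∈ Icc (0 : ℝ) 1) ∧ ∀ k < n, X k * (a k + X (k + 1)) = 1 := by
  induction n generalizing a with
  | zero => exact ⟨fun _ => 0, by simp, by simp⟩
  | succ n ih =>
    obtain ⟨X, hX, hrec⟩ := ih fun k => ha (k + 1)
    have hden : (1 : ℝ) ≤ a 0 + X 0 := by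
      have : (1 : ℝ) ≤ a 0 := by exact_mod_cast ha 0
      linarith [(hX 0).1]
    refine ⟨fun | 0 => (a 0 + X 0)⁻¹ | k + 1 => X k, ?_, ?_⟩
    · rintro (_ | k)
      · exact ⟨by positivity, inv_le_one_of_one_le₀ hden⟩
      · exact hX k
    · rintro (_ | k) hk
      · exact inv_mul_cancel₀ (by positivity)
      · exact hrec k (by lia)

lemma exists_isContFracTails {a : ℕ → ℕ} (ha : ∀ n, 1 ≤ a n) :
    ∃ X : ℕ → ℝ, IsContFracTails X a := by
  set cube : Set (ℕ → ℝ) := univ.pi fun _ => Icc 0 1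
  set partialSol : ℕ → Set (ℕ → ℝ) := fun n => {X | ∀ k < n, X k * (a k + X (k + 1)) = 1}
  have hcube : IsCompact cube := isCompact_univ_pi fun _ => isCompact_Icc
  have hclosed : ∀ n, IsClosed (partialSol n) := fun n => by
    simp only [partialSol, ofPred_forall]
    exact isClosed_iInter fun k => isClosed_iInter fun _ =>
      isClosed_eq (by fun_prop) (by fun_prop)
  obtain ⟨X, hX⟩ := IsCompact.nonempty_iInter_of_sequence_nonempty_isCompact_isClosed
    (fun n => cube ∩ partialSol n)
    (fun n => inter_subset_inter_right _ fun X hX k hk => hX k (by lia))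
    (fun n => (exists_finite_contFracTails ha n).imp fun X hX => ⟨fun k _ => hX.1 k, hX.2⟩)
    (hcube.inter_right (hclosed 0)) (fun n => hcube.isClosed.inter (hclosed n))
  rw [mem_iInter] at hX
  have hIcc : ∀ n, X n ∈ Icc (0 : ℝ) 1 := fun n => (hX 0).1 n trivial
  have hrec : ∀ n, X n * (a n + X (n + 1)) = 1 := fun n => (hX (n + 1)).2 n (by lia)
  have hpos : ∀ n, 0 < X n := fun n =>
    (hIcc n).1.lt_of_ne' fun h => by simpa [h] using hrec n
  refine ⟨X, hpos, fun n => ?_, hrec⟩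
  have : (1 : ℝ) ≤ a n := by exact_mod_cast ha n
  nlinarith [hrec n, hpos n, hpos (n + 1)]

/-- The remainders of the Cantor series expansion `t = ∑ dₙ / (M 0 * ⋯ * M n)` of `t ∈ [0, 1)` in
the mixed base `M`: the remainder is rescaled by `M n` and reduced modulo `1` at each step. -/
noncomputable def cantorRemainder (M : ℕ → ℕ) (t : ℝ) : ℕ → ℝ
  | 0 => t
  | n + 1 => Int.fract (M n * cantorRemainder M t n)

/-- The digits `dₙ` of the Cantor series expansion of `t ∈ [0, 1)` in the mixed base `M`. -/
noncomputable def cantorDigit (M : ℕ → ℕ) (t : ℝ) (n : ℕ) : ℕ := ⌊M n * cantorRemainder M t n⌋₊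

section CantorSeries

variable {M : ℕ → ℕ} {t t' : ℝ}

lemma cantorRemainder_mem_Ico (ht : t ∈ Ico (0 : ℝ) 1) (n : ℕ) :
    cantorRemainder M t n ∈ Ico (0 : ℝ) 1 := by
  cases n with
  | zero => exact ht
  | succ n => exact ⟨Int.fract_nonneg _, Int.fract_lt_one _⟩

lemma mul_cantorRemainder (ht : t ∈ Ico (0 : ℝ) 1) (n : ℕ) :
    M n * cantorRemainder M t n = cantorDigit M t n + cantorRemainder M t (n + 1) := by
  have h0 : 0 ≤ M n * cantorRemainder M t n :=
    mul_nonneg (Nat.cast_nonneg _) (cantorRemainder_mem_Ico ht n).1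
  rw [cantorDigit, natCast_floor_eq_intCast_floor h0]
  exact (Int.floor_add_fract _).symm

lemma cantorDigit_lt (hM : ∀ n, M n ≠ 0) (ht : t ∈ Ico (0 : ℝ) 1) (n : ℕ) :
    cantorDigit M t n < M n := by
  have hr := cantorRemainder_mem_Ico (M := M) ht n
  rw [cantorDigit, Nat.floor_lt (mul_nonneg (Nat.cast_nonneg _) hr.1)]
  exact mul_lt_of_lt_one_right (by exact_mod_cast (hM n).bot_lt) hr.2

lemma abs_cantorRemainder_sub_le_one (ht : t ∈ Ico (0 : ℝ) 1) (ht' : t' ∈ Ico (0 : ℝ) 1)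
    (n : ℕ) : |cantorRemainder M t n - cantorRemainder M t' n| ≤ 1 :=
  have hr := cantorRemainder_mem_Ico (M := M) ht n
  have hr' := cantorRemainder_mem_Ico (M := M) ht' n
  abs_sub_le_of_nonneg_of_le hr.1 hr.2.le hr'.1 hr'.2.le

lemma abs_sub_mul_prod_eq_abs_cantorRemainder_sub (ht : t ∈ Ico (0 : ℝ) 1)
    (ht' : t' ∈ Ico (0 : ℝ) 1) {n : ℕ} (heq : ∀ i < n, cantorDigit M t i = cantorDigit M t' i) :
    |t - t'| * ∏ i ∈ Finset.range n, (M i : ℝ) =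
      |cantorRemainder M t n - cantorRemainder M t' n| := by
  induction n with
  | zero => simp [cantorRemainder]
  | succ n ih =>
    rw [Finset.prod_range_succ, ← mul_assoc, ih fun i hi => heq i (by lia),
      ← Nat.abs_cast (M n), ← abs_mul]
    congr 1
    have hdigit : (cantorDigit M t n : ℝ) = cantorDigit M t' n := by rw [heq n (by lia)]
    linear_combination mul_cantorRemainder (M := M) ht n - mul_cantorRemainder ht' n + hdigit

lemma abs_sub_mul_prod_le (ht : t ∈ Ico (0 : ℝ) 1) (ht' : t' ∈ Ico (0 : ℝ) 1) {n : ℕ}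
    (heq : ∀ i < n, cantorDigit M t i = cantorDigit M t' i)
    (hne : cantorDigit M t n ≠ cantorDigit M t' n) :
    |t - t'| * ∏ i ∈ Finset.range (n + 1), (M i : ℝ) ≤
      2 * |(cantorDigit M t n : ℝ) - cantorDigit M t' n| := by
  have hdigit : 1 ≤ |(cantorDigit M t n : ℝ) - cantorDigit M t' n| := by
    exact_mod_cast Int.one_le_abs (sub_ne_zero.mpr (Nat.cast_injective.ne hne))
  calc |t - t'| * ∏ i ∈ Finset.range (n + 1), (M i : ℝ)
      = |(cantorRemainder M t n - cantorRemainder M t' n) * M n| := by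
        rw [Finset.prod_range_succ, ← mul_assoc,
          abs_sub_mul_prod_eq_abs_cantorRemainder_sub ht ht' heq, abs_mul, Nat.abs_cast]
    _ = |((cantorDigit M t n : ℝ) - cantorDigit M t' n) +
          (cantorRemainder M t (n + 1) - cantorRemainder M t' (n + 1))| := by
        congr 1
        linear_combination mul_cantorRemainder (M := M) ht n - mul_cantorRemainder ht' n
    _ ≤ 2 * |(cantorDigit M t n : ℝ) - cantorDigit M t' n| := by
        linarith [abs_add_le ((cantorDigit M t n : ℝ) - cantorDigit M t' n)
          (cantorRemainder M t (n + 1) - cantorRemainder M t' (n + 1)),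
          abs_cantorRemainder_sub_le_one (M := M) ht ht' (n + 1)]

lemma exists_cantorDigit_ne (hM : ∀ n, 2 ≤ M n) (ht : t ∈ Ico (0 : ℝ) 1)
    (ht' : t' ∈ Ico (0 : ℝ) 1) (hne : t ≠ t') :
    ∃ n, cantorDigit M t n ≠ cantorDigit M t' n := by
  by_contra! hdigits
  have hpos : 0 < |t - t'| := abs_sub_pos.mpr hne
  obtain ⟨n, hn⟩ := pow_unbounded_of_one_lt |t - t'|⁻¹ one_lt_two
  have hprod : (2 : ℝ) ^ n ≤ ∏ i ∈ Finset.range n, (M i : ℝ) := by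
    calc (2 : ℝ) ^ n = ∏ _i ∈ Finset.range n, (2 : ℝ) := by simp
      _ ≤ ∏ i ∈ Finset.range n, (M i : ℝ) :=
        Finset.prod_le_prod (fun _ _ => by norm_num) fun i _ => by exact_mod_cast hM i
  have hle : |t - t'| * 2 ^ n ≤ 1 := by
    calc |t - t'| * 2 ^ n ≤ |t - t'| * ∏ i ∈ Finset.range n, (M i : ℝ) := by gcongr
      _ ≤ 1 := by
        rw [abs_sub_mul_prod_eq_abs_cantorRemainder_sub ht ht' fun i _ => hdigits i]
        exact abs_cantorRemainder_sub_le_one ht ht' n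
  exact hle.not_gt ((inv_lt_iff_one_lt_mul₀' hpos).mp hn)

end CantorSeries

section LowerBound

lemma le_mul_rpow_of_mul_le {T Q R V k m C s : ℝ} (hs : s ∈ Icc (0 : ℝ) 1) (hQ : 0 < Q)
    (hR : 0 ≤ R) (hV : 0 ≤ V) (hk : 0 < k) (hkm : k ≤ m) (hT : T * Q ≤ 2 * k) (hkR : k ≤ V * R)
    (hC : 2 * V ^ s * m ^ (1 - s) ≤ C * Q) : T ≤ C * R ^ s := by
  have hs' : 0 ≤ 1 - s := sub_nonneg.mpr hs.2
  refine le_of_mul_le_mul_right ?_ hQ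
  calc T * Q ≤ 2 * (k ^ s * k ^ (1 - s)) := by
        rwa [← Real.rpow_add hk, add_sub_cancel, Real.rpow_one]
    _ ≤ 2 * ((V * R) ^ s * m ^ (1 - s)) := by gcongr; exact hs.1
    _ = 2 * V ^ s * m ^ (1 - s) * R ^ s := by rw [Real.mul_rpow hV hR]; ring
    _ ≤ C * Q * R ^ s := by gcongr
    _ = C * R ^ s * Q := by ring

lemma inv_two_mul_le_of_isContFracTails {M : ℕ → ℕ} (hM : ∀ n, M n ≠ 0) {t : ℝ}
    (ht : t ∈ Ico (0 : ℝ) 1) {X : ℕ → ℝ}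
    (hX : IsContFracTails X fun n => M n + cantorDigit M t n) (n : ℕ) :
    (2 * M n : ℝ)⁻¹ ≤ X n := by
  refine le_trans ?_ (hX.inv_digit_add_one_le n)
  have hlt := cantorDigit_lt hM ht n
  gcongr
  exact_mod_cast (by lia : M n + cantorDigit M t n + 1 ≤ 2 * M n)

lemma abs_cantorDigit_sub_le {M : ℕ → ℕ} (hM : ∀ n, 2 ≤ M n) {t t' : ℝ}
    (ht : t ∈ Ico (0 : ℝ) 1) (ht' : t' ∈ Ico (0 : ℝ) 1) {X Y : ℕ → ℝ}
    (hX : IsContFracTails X fun n => M n + cantorDigit M t n)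
    (hY : IsContFracTails Y fun n => M n + cantorDigit M t' n) {n : ℕ}
    (heq : ∀ i < n, cantorDigit M t i = cantorDigit M t' i) :
    |(cantorDigit M t n : ℝ) - cantorDigit M t' n| ≤
      2 * (∏ i ∈ Finset.range (n + 1), (2 * M i : ℝ)) ^ 2 * |X 0 - Y 0| := by
  have hM0 : ∀ n, M n ≠ 0 := fun n => by have := hM n; lia
  have hW : 0 < ∏ i ∈ Finset.range (n + 1), (2 * M i : ℝ) :=
    Finset.prod_pos fun i _ => mul_pos two_pos (by exact_mod_cast (hM0 i).bot_lt)
  have hprod : ((∏ i ∈ Finset.range (n + 1), (2 * M i : ℝ)) ^ 2)⁻¹ ≤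
      ∏ i ∈ Finset.range (n + 1), X i * Y i := by
    rw [sq, mul_inv, ← Finset.prod_inv_distrib, ← Finset.prod_mul_distrib]
    refine Finset.prod_le_prod (fun i _ => by positivity) fun i _ => ?_
    exact mul_le_mul (inv_two_mul_le_of_isContFracTails hM0 ht hX i)
      (inv_two_mul_le_of_isContFracTails hM0 ht' hY i) (by positivity) (hX.pos i).le
  have hdist := hX.abs_digit_sub_mul_prod_le hY (n := n) (fun i hi => by rw [heq i hi])
    ((hM _).trans (Nat.le_add_right _ _)) ((hM _).trans (Nat.le_add_right _ _))
  push_cast at hdist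
  rw [add_sub_add_left_eq_sub] at hdist
  rw [mul_right_comm, ← div_le_iff₀ (by positivity), div_eq_mul_inv]
  exact (mul_le_mul_of_nonneg_left hprod (abs_nonneg _)).trans hdist

lemma abs_sub_le_mul_abs_sub_rpow {M : ℕ → ℕ} (hM : ∀ n, 2 ≤ M n) {s C : ℝ}
    (hs : s ∈ Icc (0 : ℝ) 1) (hC0 : 0 ≤ C)
    (hC : ∀ n, 2 * (2 * (∏ i ∈ Finset.range (n + 1), (2 * M i : ℝ)) ^ 2) ^ s *
      (M n : ℝ) ^ (1 - s) ≤ C * ∏ i ∈ Finset.range (n + 1), (M i : ℝ))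
    {t t' : ℝ} (ht : t ∈ Ico (0 : ℝ) 1) (ht' : t' ∈ Ico (0 : ℝ) 1) {X Y : ℕ → ℝ}
    (hX : IsContFracTails X fun n => M n + cantorDigit M t n)
    (hY : IsContFracTails Y fun n => M n + cantorDigit M t' n) :
    |t - t'| ≤ C * |X 0 - Y 0| ^ s := by
  rcases eq_or_ne t t' with rfl | hne
  · rw [sub_self, abs_zero]
    positivity
  have hexists := exists_cantorDigit_ne hM ht ht' hne
  obtain ⟨n, hn, heq⟩ : ∃ n, cantorDigit M t n ≠ cantorDigit M t' n ∧
      ∀ i < n, cantorDigit M t i = cantorDigit M t' i := by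
    classical
    exact ⟨Nat.find hexists, Nat.find_spec hexists,
      fun i hi => not_not.mp (Nat.find_min hexists hi)⟩
  have hM0 : ∀ n, M n ≠ 0 := fun n => by have := hM n; lia
  have hdigit_le : |(cantorDigit M t n : ℝ) - cantorDigit M t' n| ≤ M n :=
    abs_sub_le_of_nonneg_of_le (Nat.cast_nonneg _)
      (by exact_mod_cast (cantorDigit_lt hM0 ht n).le) (Nat.cast_nonneg _)
      (by exact_mod_cast (cantorDigit_lt hM0 ht' n).le)
  exact le_mul_rpow_of_mul_le hs
    (Finset.prod_pos fun i _ => by exact_mod_cast (hM0 i).bot_lt) (abs_nonneg _) (by positivity)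
    (abs_sub_pos.mpr (Nat.cast_injective.ne hn)) hdigit_le (abs_sub_mul_prod_le ht ht' heq hn)
    (abs_cantorDigit_sub_le hM ht ht' hX hY heq) (hC n)

lemma le_dimH_setOf_forall_le_pq {M : ℕ → ℕ} (hM : ∀ n, 2 ≤ M n) {s C : ℝ≥0} (hs0 : 0 < s)
    (hs1 : s ≤ 1)
    (hC : ∀ n, 2 * (2 * (∏ i ∈ Finset.range (n + 1), (2 * M i : ℝ)) ^ 2) ^ (s : ℝ) *
      (M n : ℝ) ^ (1 - s : ℝ) ≤ C * ∏ i ∈ Finset.range (n + 1), (M i : ℝ)) :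
    s ≤ dimH {x : ℝ | x ∈ Ioo (0 : ℝ) 1 ∧ Irrational x ∧ ∀ n, M n ≤ pq x (n + 1)} := by
  have hexists : ∀ t, ∃ X : ℕ → ℝ, IsContFracTails X fun n => M n + cantorDigit M t n :=
    fun t => exists_isContFracTails fun n => by have := hM n; lia
  choose X hX using hexists
  have hmaps : (fun t => X t 0) '' Ico 0 1 ⊆
      {x | x ∈ Ioo (0 : ℝ) 1 ∧ Irrational x ∧ ∀ n, M n ≤ pq x (n + 1)} := by
    rintro _ ⟨t, -, rfl⟩
    exact ⟨⟨(hX t).pos 0, (hX t).lt_one 0⟩, (hX t).irrational 0, fun n => by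
      rw [(hX t).pq_succ]; exact Nat.le_add_right _ _⟩
  have hholder : ∀ t ∈ Ico (0 : ℝ) 1, ∀ t' ∈ Ico (0 : ℝ) 1,
      edist t t' ≤ C * edist (X t 0) (X t' 0) ^ (s : ℝ) := fun t ht t' ht' => by
    rw [edist_dist, edist_dist, ENNReal.ofReal_rpow_of_nonneg dist_nonneg s.coe_nonneg,
      ← ENNReal.ofReal_coe_nnreal, ← ENNReal.ofReal_mul C.coe_nonneg]
    exact ENNReal.ofReal_le_ofReal (abs_sub_le_mul_abs_sub_rpow hM ⟨s.coe_nonneg, hs1⟩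
      C.coe_nonneg hC ht ht' (hX t) (hX t'))
  calc (s : ℝ≥0∞) = s * dimH (Ico (0 : ℝ) 1) := by
        rw [Real.dimH_of_nonempty_interior (by simp)]; simp
    _ ≤ dimH ((fun t => X t 0) '' Ico 0 1) := mul_dimH_le_dimH_image_of_edist_le hs0 hholder
    _ ≤ _ := dimH_mono hmaps

lemma log_mul_geom_sum_le_log_prod {b c : ℝ} (hb : b ≠ 1) (hc : 0 < c) {M : ℕ → ℝ}
    (hM : ∀ n, c ^ b ^ (n + 1) ≤ M n) (n : ℕ) :
    Real.log c * (b * ((b ^ n - 1) / (b - 1))) ≤ Real.log (∏ i ∈ Finset.range n, M i) := by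
  have hpos : ∀ i, 0 < M i := fun i => (Real.rpow_pos_of_pos hc _).trans_le (hM i)
  rw [Real.log_prod fun i _ => (hpos i).ne', ← geom_sum_eq hb, Finset.mul_sum, Finset.mul_sum]
  refine Finset.sum_le_sum fun i _ => ?_
  calc Real.log c * (b * b ^ i) = Real.log (c ^ b ^ (i + 1)) := by
        rw [Real.log_rpow hc, pow_succ']; ring
    _ ≤ Real.log (M i) := Real.log_le_log (Real.rpow_pos_of_pos hc _) (hM i)

/- The sum `b + ⋯ + b ^ (n + 1)` is about `b / (b - 1) * b ^ (n + 1)`, and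
`s * (b + 1) < 1` is exactly `1 - s < (1 - 2 * s) * b / (b - 1)`. -/
lemma exists_log_le_add_log_prod {b c s : ℝ} (hb : 1 < b) (hc : 1 < c) (hs : s * (b + 1) < 1)
    (hs0 : 0 ≤ s) {M : ℕ → ℝ} (hM : ∀ n, c ^ b ^ (n + 1) ≤ M n)
    (hM' : ∀ n, M n ≤ 2 * c ^ b ^ (n + 1)) :
    ∃ K, ∀ n : ℕ, (n + 1) * (2 * s * Real.log 2) +
      2 * s * Real.log (∏ i ∈ Finset.range (n + 1), M i) + (1 - s) * Real.log (M n) ≤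
        K + Real.log (∏ i ∈ Finset.range (n + 1), M i) := by
  have hb' : 0 < b - 1 := sub_pos.mpr hb
  have hL : 0 < Real.log c := Real.log_pos hc
  have hs2 : 2 * s ≤ 1 := by nlinarith
  set L := Real.log c
  set δ := (1 - s * (b + 1)) / (b - 1) with hδ
  have hδ0 : 0 < δ := div_pos (by linarith) hb'
  obtain ⟨K, hK⟩ := bddAbove_range_mul_sub_mul_pow hb (2 * s * Real.log 2) (mul_pos hL hδ0)
  refine ⟨K + (1 - s) * Real.log 2 + (1 - 2 * s) * (L * (b / (b - 1))), fun n => ?_⟩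
  have hKn : 2 * s * Real.log 2 * (n + 1) - L * δ * b ^ (n + 1) ≤ K := by
    exact_mod_cast hK (mem_range_self (n + 1))
  have hprod := mul_le_mul_of_nonneg_left
    (log_mul_geom_sum_le_log_prod hb.ne' (zero_lt_one.trans hc) hM (n + 1)) (sub_nonneg.mpr hs2)
  have hlast : Real.log (M n) ≤ Real.log 2 + L * b ^ (n + 1) := by
    have hpow : 0 < c ^ b ^ (n + 1) := Real.rpow_pos_of_pos (zero_lt_one.trans hc) _
    calc Real.log (M n) ≤ Real.log (2 * c ^ b ^ (n + 1)) :=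
          Real.log_le_log (hpow.trans_le (hM n)) (hM' n)
      _ = Real.log 2 + L * b ^ (n + 1) := by
          rw [Real.log_mul two_ne_zero hpow.ne', Real.log_rpow (zero_lt_one.trans hc), mul_comm L]
  have hlast' := mul_le_mul_of_nonneg_left hlast (by linarith : 0 ≤ 1 - s)
  have hexponents : (1 - 2 * s) * (L * (b * ((b ^ (n + 1) - 1) / (b - 1)))) =
      (1 - s) * (L * b ^ (n + 1)) + L * δ * b ^ (n + 1) -
        (1 - 2 * s) * (L * (b / (b - 1))) := by
    rw [hδ]
    field_simp
    ring
  linarith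

lemma exists_forall_mul_rpow_le_mul_prod {b c s : ℝ} (hb : 1 < b) (hc : 1 < c)
    (hs : s * (b + 1) < 1) (hs0 : 0 ≤ s) {M : ℕ → ℝ} (hM : ∀ n, c ^ b ^ (n + 1) ≤ M n)
    (hM' : ∀ n, M n ≤ 2 * c ^ b ^ (n + 1)) :
    ∃ C : ℝ≥0, ∀ n, 2 * (2 * (∏ i ∈ Finset.range (n + 1), 2 * M i) ^ 2) ^ s * M n ^ (1 - s) ≤
      C * ∏ i ∈ Finset.range (n + 1), M i := by
  obtain ⟨K, hK⟩ := exists_log_le_add_log_prod hb hc hs hs0 hM hM'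
  have hpos : ∀ i, 0 < M i := fun i =>
    (Real.rpow_pos_of_pos (zero_lt_one.trans hc) _).trans_le (hM i)
  refine ⟨(Real.exp ((1 + s) * Real.log 2 + K)).toNNReal, fun n => ?_⟩
  have hn : 0 < M n := hpos n
  have hQ : 0 < ∏ i ∈ Finset.range (n + 1), M i := Finset.prod_pos fun i _ => hpos i
  specialize hK n
  rw [Real.coe_toNNReal _ (Real.exp_pos _).le, Finset.prod_mul_distrib, Finset.prod_const,
    Finset.card_range]
  set Q := ∏ i ∈ Finset.range (n + 1), M i
  have hlog : Real.log (2 * (2 * (2 ^ (n + 1) * Q) ^ 2) ^ s * M n ^ (1 - s)) =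
      Real.log 2 + s * (Real.log 2 + 2 * ((n + 1) * Real.log 2 + Real.log Q)) +
        (1 - s) * Real.log (M n) := by
    rw [Real.log_mul (by positivity) (by positivity), Real.log_mul two_ne_zero (by positivity),
      Real.log_rpow (by positivity), Real.log_rpow hn, Real.log_mul two_ne_zero (by positivity),
      Real.log_pow, Real.log_mul (by positivity) hQ.ne', Real.log_pow]
    push_cast
    ring
  rw [← Real.log_le_log_iff (by positivity) (by positivity), hlog,
    Real.log_mul (Real.exp_pos _).ne' hQ.ne', Real.log_exp]
  linarith

lemma ofReal_one_div_le_dimH_setOf_forall {b c : ℝ} (hb : 1 < b) (hc : 1 < c) :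
    ENNReal.ofReal (1 / (b + 1)) ≤ dimH {x : ℝ | x ∈ Ioo (0 : ℝ) 1 ∧ Irrational x ∧
      ∀ n : ℕ, 1 ≤ n → c ^ (b ^ n) ≤ (pq x n : ℝ)} := by
  refine ENNReal.le_of_forall_pos_nnreal_lt fun s hs0 hs => ?_
  have hsb : (s : ℝ) * (b + 1) < 1 := by
    rw [← lt_div_iff₀ (by linarith)]
    simpa using (ENNReal.lt_ofReal_iff_toReal_lt (by simp)).mp hs
  have hs1 : s ≤ 1 := by
    have : (s : ℝ) ≤ 1 := by nlinarith [s.coe_nonneg]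
    exact_mod_cast this
  set M : ℕ → ℕ := fun n => ⌈c ^ b ^ (n + 1)⌉₊
  have hone : ∀ n : ℕ, 1 < c ^ b ^ (n + 1) := fun n => Real.one_lt_rpow hc (by positivity)
  have hle : ∀ n, c ^ b ^ (n + 1) ≤ (M n : ℝ) := fun n => Nat.le_ceil _
  have hle' : ∀ n, (M n : ℝ) ≤ 2 * c ^ b ^ (n + 1) := fun n => by
    linarith [Nat.ceil_lt_add_one (zero_le_one.trans (hone n).le), hone n]
  have hM : ∀ n, 2 ≤ M n := fun n => Nat.lt_ceil.mpr (by exact_mod_cast hone n)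
  obtain ⟨C, hC⟩ := exists_forall_mul_rpow_le_mul_prod hb hc hsb s.coe_nonneg hle hle'
  refine (le_dimH_setOf_forall_le_pq hM hs0 hs1 hC).trans (dimH_mono ?_)
  rintro x ⟨hx, hirr, hpq⟩
  refine ⟨hx, hirr, fun n hn => ?_⟩
  obtain ⟨k, rfl⟩ := Nat.exists_eq_add_of_le' hn
  exact (hle k).trans (by exact_mod_cast hpq k)

end LowerBound

section UpperBound

lemma tsum_fin_pi_prod {α : Type*} (g : α → ℝ≥0∞) (n : ℕ) :
    ∑' w : Fin n → α, ∏ i, g (w i) = (∑' k, g k) ^ n := by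
  induction n with
  | zero => simp
  | succ n ih =>
    rw [← (Fin.consEquiv fun _ : Fin (n + 1) => α).tsum_eq, ENNReal.tsum_prod']
    simp_rw [Fin.consEquiv_apply, Fin.prod_univ_succ, Fin.cons_zero, Fin.cons_succ,
      ENNReal.tsum_mul_left, ih]
    rw [ENNReal.tsum_mul_right, pow_succ']

lemma one_div_mul_rpow_le {P E F β η s : ℝ} (hP : 0 < P) (hF : 0 < F) (hPE : P ^ β ≤ E)
    (hFE : F ≤ E) (hη : 0 ≤ η) (hηs : η ≤ s) :
    (1 / (P * E)) ^ s ≤ F ^ (-η) * P ^ (-(s + β * (s - η))) := by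
  have hE : 0 < E := hF.trans_le hFE
  have hsplit : F ^ η * P ^ (β * (s - η)) ≤ E ^ s := by
    calc F ^ η * P ^ (β * (s - η)) = F ^ η * (P ^ β) ^ (s - η) := by rw [Real.rpow_mul hP.le]
      _ ≤ E ^ η * E ^ (s - η) := by gcongr
      _ = E ^ s := by rw [← Real.rpow_add hE, add_sub_cancel]
  rw [one_div, Real.inv_rpow (by positivity), Real.rpow_neg hF.le, Real.rpow_neg hP.le,
    ← mul_inv, Real.mul_rpow hP.le hE.le, Real.rpow_add hP]
  refine inv_anti₀ (by positivity) ?_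
  calc F ^ η * (P ^ s * P ^ (β * (s - η))) = P ^ s * (F ^ η * P ^ (β * (s - η))) := by ring
    _ ≤ P ^ s * E ^ s := by gcongr

/-- The points whose first `n` partial quotients are `w` and whose next partial quotient is so
large that the product of the first `n + 1` partial quotients is at least `E`. -/
def bigDigitCylinder {n : ℕ} (w : Fin n → ℕ) (E : ℝ) : Set ℝ :=
  {x | x ∈ Ioo (0 : ℝ) 1 ∧ Irrational x ∧ (∀ i : Fin n, pq x (i + 1) = w i) ∧
    E ≤ (∏ i, (w i : ℝ)) * pq x (n + 1)}

section Cylinder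

variable {n : ℕ} {w : Fin n → ℕ} {E x y : ℝ}

lemma prod_pos_of_mem_bigDigitCylinder (hE : 0 < E) (hx : x ∈ bigDigitCylinder w E) :
    0 < ∏ i, (w i : ℝ) :=
  pos_of_mul_pos_left (hE.trans_le hx.2.2.2) (Nat.cast_nonneg _)

lemma iterate_gaussMap_mem_Icc_of_mem_bigDigitCylinder (hE : 0 < E)
    (hx : x ∈ bigDigitCylinder w E) : gaussMap^[n] x ∈ Icc 0 ((∏ i, (w i : ℝ)) / E) := by
  have htails := isContFracTails_iterate_gaussMap hx.1 hx.2.1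
  have hdigit : (0 : ℝ) < pq x (n + 1) := by exact_mod_cast htails.one_le_digit n
  refine ⟨(htails.pos n).le, (htails.le_inv_digit n).trans ?_⟩
  rw [inv_eq_one_div, div_le_div_iff₀ hdigit hE, one_mul]
  exact hx.2.2.2

lemma abs_sub_le_of_mem_bigDigitCylinder (hE : 0 < E) (hx : x ∈ bigDigitCylinder w E)
    (hy : y ∈ bigDigitCylinder w E) : |x - y| ≤ 1 / ((∏ i, (w i : ℝ)) * E) := by
  have hP := prod_pos_of_mem_bigDigitCylinder hE hx
  have hxn := iterate_gaussMap_mem_Icc_of_mem_bigDigitCylinder hE hx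
  have hyn := iterate_gaussMap_mem_Icc_of_mem_bigDigitCylinder hE hy
  have hword : ∏ i ∈ Finset.range n, (pq x (i + 1) : ℝ) = ∏ i, (w i : ℝ) := by
    rw [Finset.prod_range]
    exact Finset.prod_congr rfl fun i _ => by rw [hx.2.2.1 i]
  have hdist := (isContFracTails_iterate_gaussMap hx.1 hx.2.1).abs_sub_le_div_sq_prod
    (isContFracTails_iterate_gaussMap hy.1 hy.2.1)
    (fun i hi => (hx.2.2.1 ⟨i, hi⟩).trans (hy.2.2.1 ⟨i, hi⟩).symm)
  rw [hword] at hdist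
  calc |x - y| ≤ |gaussMap^[n] x - gaussMap^[n] y| / (∏ i, (w i : ℝ)) ^ 2 := hdist
    _ ≤ (∏ i, (w i : ℝ)) / E / (∏ i, (w i : ℝ)) ^ 2 := by
        gcongr
        exact abs_sub_le_of_nonneg_of_le hxn.1 hxn.2 hyn.1 hyn.2
    _ = 1 / ((∏ i, (w i : ℝ)) * E) := by field_simp

lemma ediam_bigDigitCylinder_le (hE : 0 < E) :
    Metric.ediam (bigDigitCylinder w E) ≤ ENNReal.ofReal (1 / ((∏ i, (w i : ℝ)) * E)) :=
  Metric.ediam_le fun x hx y hy => by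
    rw [edist_dist]
    exact ENNReal.ofReal_le_ofReal (abs_sub_le_of_mem_bigDigitCylinder hE hx hy)

end Cylinder

/-- The threshold for `bigDigitCylinder` in the covering argument. Its first entry forces
`aₙ₊₁ ≥ (a₁ ⋯ aₙ) ^ (β - 1)`; the second one makes the sum over all lengths `n` converge. -/
noncomputable def digitThreshold (β : ℝ) {n : ℕ} (w : Fin n → ℕ) : ℝ :=
  max ((∏ i, (w i : ℝ)) ^ β) (Real.exp (β ^ (n + 1)))

lemma digitThreshold_pos (β : ℝ) {n : ℕ} (w : Fin n → ℕ) : 0 < digitThreshold β w :=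
  lt_max_of_lt_right (Real.exp_pos _)

lemma ediam_bigDigitCylinder_digitThreshold_rpow_le {β η s : ℝ} (hη : 0 ≤ η) (hηs : η ≤ s)
    (hs : 0 < s) {n : ℕ} (w : Fin n → ℕ) :
    Metric.ediam (bigDigitCylinder w (digitThreshold β w)) ^ s ≤
      ENNReal.ofReal (Real.exp (-(η * β ^ (n + 1)))) *
        ∏ i, ENNReal.ofReal ((w i : ℝ) ^ (-(s + β * (s - η)))) := by
  have hE := digitThreshold_pos β w
  rcases (bigDigitCylinder w (digitThreshold β w)).eq_empty_or_nonempty with hempty | ⟨x, hx⟩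
  · rw [hempty, Metric.ediam_empty, ENNReal.zero_rpow_of_pos hs]
    exact zero_le
  have hP := prod_pos_of_mem_bigDigitCylinder hE hx
  have hexp : Real.exp (-(η * β ^ (n + 1))) = Real.exp (β ^ (n + 1)) ^ (-η) := by
    rw [← Real.exp_mul]
    congr 1
    ring
  calc Metric.ediam (bigDigitCylinder w (digitThreshold β w)) ^ s
      ≤ ENNReal.ofReal (1 / ((∏ i, (w i : ℝ)) * digitThreshold β w)) ^ s := by
        gcongr
        exact ediam_bigDigitCylinder_le hE
    _ = ENNReal.ofReal ((1 / ((∏ i, (w i : ℝ)) * digitThreshold β w)) ^ s) :=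
        ENNReal.ofReal_rpow_of_nonneg (by positivity) hs.le
    _ ≤ ENNReal.ofReal (Real.exp (β ^ (n + 1)) ^ (-η) *
          (∏ i, (w i : ℝ)) ^ (-(s + β * (s - η)))) :=
        ENNReal.ofReal_le_ofReal (one_div_mul_rpow_le hP (Real.exp_pos _) (le_max_left _ _)
          (le_max_right _ _) hη hηs)
    _ = _ := by
        rw [hexp, ENNReal.ofReal_mul (by positivity),
          ← Real.finsetProd_rpow _ _ fun i _ => Nat.cast_nonneg _,
          ENNReal.ofReal_prod_of_nonneg fun i _ => by positivity]

lemma tsum_sigma_fin_pi_exp_mul_prod_rpow_ne_top {β η ρ : ℝ} (hβ : 1 < β) (hη : 0 < η)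
    (hρ : 1 < ρ) :
    ∑' p : Σ n : ℕ, Fin n → ℕ, ENNReal.ofReal (Real.exp (-(η * β ^ (p.1 + 1)))) *
      ∏ i, ENNReal.ofReal ((p.2 i : ℝ) ^ (-ρ)) ≠ ∞ := by
  set Z := ∑' k : ℕ, (k : ℝ) ^ (-ρ)
  have hZ0 : 0 ≤ Z := tsum_nonneg fun k => by positivity
  have hZ : ∑' k : ℕ, ENNReal.ofReal ((k : ℝ) ^ (-ρ)) = ENNReal.ofReal Z :=
    (ENNReal.ofReal_tsum_of_nonneg (fun k => by positivity)
      (Real.summable_nat_rpow.mpr (neg_lt_neg hρ))).symm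
  have hterm : ∀ n : ℕ, ENNReal.ofReal (Real.exp (-(η * β ^ (n + 1)))) * ENNReal.ofReal Z ^ n ≤
      ENNReal.ofReal (Real.exp (Z * n - η * β * β ^ n)) := fun n => by
    rw [← ENNReal.ofReal_pow hZ0, ← ENNReal.ofReal_mul (Real.exp_pos _).le]
    refine ENNReal.ofReal_le_ofReal ?_
    calc Real.exp (-(η * β ^ (n + 1))) * Z ^ n
        ≤ Real.exp (-(η * β ^ (n + 1))) * Real.exp Z ^ n := by
          gcongr
          linarith [Real.add_one_le_exp Z]
      _ = Real.exp (Z * n - η * β * β ^ n) := by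
          rw [← Real.exp_nat_mul, ← Real.exp_add]
          congr 1
          ring
  rw [ENNReal.tsum_sigma']
  simp_rw [ENNReal.tsum_mul_left, tsum_fin_pi_prod fun k : ℕ => ENNReal.ofReal ((k : ℝ) ^ (-ρ)), hZ]
  exact ne_top_of_le_ne_top
    (summable_exp_mul_sub_mul_pow hβ Z (by positivity : 0 < η * β)).tsum_ofReal_ne_top
    (ENNReal.tsum_le_tsum hterm)

lemma not_bddAbove_range_log_div_pow {b c β : ℝ} (hβ : 0 < β) (hβb : β < b) (hc : 1 < c)
    {P : ℕ → ℝ} (hP : ∃ᶠ n in atTop, c ^ b ^ n ≤ P n) :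
    ¬ BddAbove (range fun n => Real.log (P n) / β ^ n) := by
  rintro ⟨K, hK⟩
  have hc0 : 0 < c := zero_lt_one.trans hc
  have hlim : Tendsto (fun n : ℕ => (b / β) ^ n * Real.log c) atTop atTop :=
    (tendsto_pow_atTop_atTop_of_one_lt ((one_lt_div hβ).mpr hβb)).atTop_mul_const
      (Real.log_pos hc)
  obtain ⟨n, hn, hKn⟩ := (hP.and_eventually (hlim.eventually_gt_atTop K)).exists
  refine hKn.not_ge (le_trans ?_ (hK (mem_range_self n)))
  calc (b / β) ^ n * Real.log c = Real.log (c ^ b ^ n) / β ^ n := by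
        rw [Real.log_rpow hc0, div_pow]; ring
    _ ≤ Real.log (P n) / β ^ n := by
        gcongr

lemma frequently_mem_bigDigitCylinder {b c β x : ℝ} (hβ : 0 < β) (hβb : β < b) (hc : 1 < c)
    (hx : x ∈ Ioo (0 : ℝ) 1) (hirr : Irrational x)
    (hinf : {n : ℕ | c ^ (b ^ n) ≤ (pq x n : ℝ)}.Infinite) :
    ∃ᶠ n in atTop, x ∈ bigDigitCylinder (fun i : Fin n => pq x (i + 1))
      (digitThreshold β fun i : Fin n => pq x (i + 1)) := by
  have hdigit : ∀ n, 1 ≤ pq x (n + 1) :=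
    (isContFracTails_iterate_gaussMap hx hirr).one_le_digit
  set P : ℕ → ℝ := fun n => ∏ i ∈ Finset.range n, (pq x (i + 1) : ℝ)
  have hP_succ : ∀ n, P (n + 1) = P n * pq x (n + 1) := fun n => Finset.prod_range_succ _ n
  have hP_one_le : ∀ n, 1 ≤ P n := fun n => by
    simp only [P]
    exact_mod_cast Finset.one_le_prod'' (s := Finset.range n) fun i => hdigit i
  have hP_pos : ∀ n, 0 < P n := fun n => zero_lt_one.trans_le (hP_one_le n)
  have hle : ∀ n ≥ 1, (pq x n : ℝ) ≤ P n := fun n hn => by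
    obtain ⟨k, rfl⟩ := Nat.exists_eq_add_of_le' hn
    rw [hP_succ]
    exact le_mul_of_one_le_left (Nat.cast_nonneg _) (hP_one_le k)
  have hlarge : ∃ᶠ n in atTop, c ^ b ^ n ≤ P n :=
    ((Nat.frequently_atTop_iff_infinite.mpr hinf).and_eventually (eventually_ge_atTop 1)).mono
      fun n hn => hn.1.trans (hle n hn.2)
  refine (frequently_le_succ_and_le_of_not_bddAbove
    (not_bddAbove_range_log_div_pow hβ hβb hc hlarge) 1).mono fun n ⟨hmono, hone⟩ => ?_
  have hword : ∏ i : Fin n, (pq x (i + 1) : ℝ) = P n :=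
    (Finset.prod_range fun i => (pq x (i + 1) : ℝ)).symm
  refine ⟨hx, hirr, fun i => rfl, ?_⟩
  rw [digitThreshold, hword, ← hP_succ]
  refine max_le ?_ ?_
  · rw [← Real.log_le_log_iff (Real.rpow_pos_of_pos (hP_pos n) _) (hP_pos (n + 1)),
      Real.log_rpow (hP_pos n)]
    rw [div_le_div_iff₀ (by positivity) (by positivity), pow_succ', ← mul_assoc] at hmono
    rw [mul_comm β]
    exact le_of_mul_le_mul_right hmono (by positivity)
  · rwa [← Real.le_log_iff_exp_le (hP_pos (n + 1)), ← one_le_div (by positivity)]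

lemma exists_one_lt_add_mul_sub {b s : ℝ} (hb : 1 < b) (hs : 0 < s) (hsb : 1 < s * (b + 1)) :
    ∃ β η, 1 < β ∧ β < b ∧ 0 < η ∧ η < s ∧ 1 < s + β * (s - η) := by
  obtain ⟨β, hβ, hβb⟩ : ∃ β, max 1 (1 / s - 1) < β ∧ β < b := by
    refine exists_between (max_lt hb ?_)
    rw [sub_lt_iff_lt_add, div_lt_iff₀ hs]
    linarith
  have hβ1 : 1 < β := (le_max_left _ _).trans_lt hβ
  have hsβ : 1 < s + β * s := by
    have := (le_max_right _ _).trans_lt hβ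
    rw [sub_lt_iff_lt_add, div_lt_iff₀ hs] at this
    linarith
  obtain ⟨η, hη, hη'⟩ : ∃ η, 0 < η ∧ η < min s ((s + β * s - 1) / β) :=
    exists_between (lt_min hs (div_pos (by linarith) (by linarith)))
  have hηβ := (lt_div_iff₀ (by linarith)).mp (hη'.trans_le (min_le_right _ _))
  exact ⟨β, η, hβ1, hβb, hη, hη'.trans_le (min_le_left _ _), by linarith⟩

lemma dimH_setOf_infinite_le_ofReal_one_div {b c : ℝ} (hb : 1 < b) (hc : 1 < c) :
    dimH {x : ℝ | x ∈ Ioo (0 : ℝ) 1 ∧ Irrational x ∧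
      {n : ℕ | c ^ (b ^ n) ≤ (pq x n : ℝ)}.Infinite} ≤ ENNReal.ofReal (1 / (b + 1)) := by
  by_contra! hlt
  obtain ⟨s, hs, hs'⟩ := ENNReal.lt_iff_exists_nnreal_btwn.mp hlt
  refine hs'.not_ge ?_
  have hs0 : 0 < s := by exact_mod_cast zero_le.trans_lt hs
  have hsb : 1 < (s : ℝ) * (b + 1) := by
    rw [← div_lt_iff₀ (by linarith)]
    simpa using (ENNReal.ofReal_lt_iff_lt_toReal (by positivity) (by simp)).mp hs
  obtain ⟨β, η, hβ, hβb, hη, hηs, hρ⟩ := exists_one_lt_add_mul_sub hb (NNReal.coe_pos.mpr hs0) hsb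
  refine dimH_le_of_tsum_ediam_rpow_ne_top
    (U := fun p : Σ n, Fin n → ℕ => bigDigitCylinder p.2 (digitThreshold β p.2)) hs0 ?_ ?_
  · exact ne_top_of_le_ne_top (tsum_sigma_fin_pi_exp_mul_prod_rpow_ne_top hβ hη hρ)
      (ENNReal.tsum_le_tsum fun p => ediam_bigDigitCylinder_digitThreshold_rpow_le hη.le hηs.le
        (NNReal.coe_pos.mpr hs0) p.2)
  · rintro x ⟨hx, hirr, hinf⟩
    have hfreq := frequently_mem_bigDigitCylinder (zero_lt_one.trans hβ) hβb hc hx hirr hinf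
    exact infinite_of_injOn_mapsTo (f := fun n => ⟨n, fun i : Fin n => pq x (i + 1)⟩)
      (fun m _ n _ hmn => congrArg Sigma.fst hmn) (fun n hn => hn)
      (Nat.frequently_atTop_iff_infinite.mp hfreq)

end UpperBound

theorem luczak (b c : ℝ) (hb : 1 < b) (hc : 1 < c) :
    dimH {x : ℝ | x ∈ Set.Ioo (0 : ℝ) 1 ∧ Irrational x ∧
        {n : ℕ | c ^ (b ^ n) ≤ (pq x n : ℝ)}.Infinite} =
      ENNReal.ofReal (1 / (b + 1)) ∧
    dimH {x : ℝ | x ∈ Set.Ioo (0 : ℝ) 1 ∧ Irrational x ∧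
        ∀ n : ℕ, 1 ≤ n → c ^ (b ^ n) ≤ (pq x n : ℝ)} =
      ENNReal.ofReal (1 / (b + 1)) := by
  have hmono : dimH {x : ℝ | x ∈ Ioo (0 : ℝ) 1 ∧ Irrational x ∧
        ∀ n : ℕ, 1 ≤ n → c ^ (b ^ n) ≤ (pq x n : ℝ)} ≤
      dimH {x : ℝ | x ∈ Ioo (0 : ℝ) 1 ∧ Irrational x ∧
        {n : ℕ | c ^ (b ^ n) ≤ (pq x n : ℝ)}.Infinite} :=
    dimH_mono fun x ⟨hx, hirr, hpq⟩ => ⟨hx, hirr, (Ici_infinite 1).mono hpq⟩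
  have hlower := ofReal_one_div_le_dimH_setOf_forall hb hc
  have hupper := dimH_setOf_infinite_le_ofReal_one_div hb hc
  exact ⟨le_antisymm hupper (hlower.trans hmono), le_antisymm (hmono.trans hupper) hlower⟩
end

section
/- The function B ↦ s_B is continuous on (1,∞); moreover lim_{B→1+} s_B = 1 and lim_{B→∞} s_B = 1/2. -/
open Filter MeasureTheory Set

/-!
Replacing `q_n(a)⁻²` by the length of the cylinder of `a`, which is comparable and sums to `1` over
words of length `n`, gives `s_B ≤ 1`. Cylinders at least halve with each letter, so the pressure is
at least `(1 - s) log 2 - s log B`, whence `s_B ≥ log 2 / log (2B)` and `s_B → 1` as `B → 1⁺`.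
Appending a letter `k` multiplies `q_n` by `k` up to a factor `2`, so the pressure is infinite for
`s ≤ 1/2`, and for fixed `s > 1/2` it is at most `log (B^(-s) ζ(2s))`, which is negative for large
`B`; hence `s_B → 1/2`. Continuity holds because `s_B` decreases in `B` while `s_B log B` increases.
-/

open scoped Topology ENNReal
open ExpGrowth (expGrowthSup)

lemma continuousOn_of_antitoneOn_of_monotoneOn_mul {α : Type*} [LinearOrder α]
    [TopologicalSpace α] {S : Set α} {f g : α → ℝ} (hf : AntitoneOn f S)
    (hfg : MonotoneOn (fun x => f x * g x) S) (hg : ContinuousOn g S) (hpos : ∀ x ∈ S, 0 < g x) :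
    ContinuousOn f S := by
  intro x hx
  have hratio : Tendsto (fun y => f x * g x / g y) (𝓝[S] x) (𝓝 (f x)) := by
    have hdiv := (tendsto_const_nhds (x := f x * g x)).div (hg x hx) (hpos x hx).ne'
    rwa [mul_div_cancel_right₀ _ (hpos x hx).ne'] at hdiv
  have hmin := (tendsto_const_nhds (x := f x)).min hratio
  have hmax := (tendsto_const_nhds (x := f x)).max hratio
  rw [min_self] at hmin
  rw [max_self] at hmax
  refine tendsto_of_tendsto_of_tendsto_of_le_of_le' hmin hmax ?_ ?_
  · filter_upwards [self_mem_nhdsWithin] with y hy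
    rcases le_total y x with hyx | hxy
    · exact min_le_of_left_le (hf hy hx hyx)
    · exact min_le_of_right_le ((div_le_iff₀ (hpos y hy)).2 (hfg hx hy hxy))
  · filter_upwards [self_mem_nhdsWithin] with y hy
    rcases le_total y x with hyx | hxy
    · exact le_max_of_le_right ((le_div_iff₀ (hpos y hy)).2 (hfg hy hx hyx))
    · exact le_max_of_le_left (hf hx hy hxy)

lemma tsum_ofReal_sub_succ_of_antitone {f : ℕ → ℝ} {l : ℝ} (hf : Antitone f)
    (hl : Tendsto f atTop (𝓝 l)) :
    ∑' n, ENNReal.ofReal (f n - f (n + 1)) = ENNReal.ofReal (f 0 - l) := by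
  have hnonneg (n : ℕ) : 0 ≤ f n - f (n + 1) := sub_nonneg.2 (hf n.le_succ)
  have hsum : HasSum (fun n => f n - f (n + 1)) (f 0 - l) := by
    rw [hasSum_iff_tendsto_nat_of_nonneg hnonneg]
    simpa only [Finset.sum_range_sub'] using hl.const_sub (f 0)
  rw [← ENNReal.ofReal_tsum_of_nonneg hnonneg hsum.summable, hsum.tsum_eq]

lemma tsum_pnat_ofReal_inv_mul_add {q p : ℝ} (hq : 0 < q) (hp : 0 ≤ p) :
    ∑' k : ℕ+, ENNReal.ofReal (((k * q + p) * (k * q + p + q))⁻¹) =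
      ENNReal.ofReal ((q * (q + p))⁻¹) := by
  set f : ℕ → ℝ := fun n => (q * ((n + 1) * q + p))⁻¹ with hf
  have hanti : Antitone f := fun m n hmn => by simp only [hf]; gcongr
  have hlim : Tendsto f atTop (𝓝 0) := by
    refine Tendsto.inv_tendsto_atTop (Tendsto.const_mul_atTop hq ?_)
    refine tendsto_atTop_add_const_right _ _ (Tendsto.atTop_mul_const hq ?_)
    exact tendsto_atTop_add_const_right _ _ tendsto_natCast_atTop_atTop
  have hterm (n : ℕ) :
      (((n + 1 : ℕ) * q + p) * ((n + 1 : ℕ) * q + p + q))⁻¹ = f n - f (n + 1) := by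
    simp only [hf]
    push_cast
    have h₁ : ((n : ℝ) + 1) * q + p ≠ 0 := by positivity
    have h₃ : ((n : ℝ) + 1) * q + p + q = ((n : ℝ) + 1 + 1) * q + p := by ring
    rw [h₃]
    field_simp
    ring
  rw [tsum_pnat_eq_tsum_succ
    (f := fun k : ℕ => ENNReal.ofReal (((k * q + p) * (k * q + p + q))⁻¹))]
  simp only [hterm, tsum_ofReal_sub_succ_of_antitone hanti hlim]
  simp [hf]

lemma tsum_pnat_ofReal_rpow_eq_top_iff {r : ℝ} :
    ∑' k : ℕ+, ENNReal.ofReal ((k : ℝ) ^ r) = ∞ ↔ -1 ≤ r := by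
  have hsummable : Summable (fun k : ℕ+ => (k : ℝ) ^ r) ↔ r < -1 :=
    (summable_pnat_iff_summable_nat (f := fun k : ℕ => (k : ℝ) ^ r)).trans Real.summable_nat_rpow
  rw [← not_lt, ← hsummable, ← not_iff_not, not_not]
  refine ⟨fun h => ?_, Summable.tsum_ofReal_ne_top⟩
  refine (ENNReal.summable_toReal h).congr fun k => ?_
  exact ENNReal.toReal_ofReal (by positivity)

lemma tsum_fin_succ_eq_tsum_tsum_snoc {α : Type*} {n : ℕ} (f : (Fin (n + 1) → α) → ℝ≥0∞) :
    ∑' a, f a = ∑' a : Fin n → α, ∑' k : α, f (Fin.snoc a k) := by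
  rw [← (Fin.snocEquiv fun _ => α).tsum_eq, ENNReal.tsum_prod', ENNReal.tsum_comm]
  rfl

lemma one_le_pnat_cast (k : ℕ+) : (1 : ℝ) ≤ k := Nat.one_le_cast.2 k.pos

/-- The continuant `q_n(a)`, real-valued and restricted to words of positive integers. -/
noncomputable def continuant {n : ℕ} (a : Fin n → ℕ+) : ℝ := contQ n fun i => a i

/-- The continuant `q_{n-1}` of `a` without its last entry, with the usual convention
`q_{-1} = 0`. -/
noncomputable def prevContinuant : {n : ℕ} → (Fin n → ℕ+) → ℝ
  | 0, _ => 0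
  | _ + 1, a => continuant (Fin.init a)

/-- The length `1 / (q_n (q_n + q_{n-1}))` of the set of `x ∈ (0, 1)` whose first `n` partial
quotients are `a`. -/
noncomputable def cylinderLength {n : ℕ} (a : Fin n → ℕ+) : ℝ :=
  (continuant a * (continuant a + prevContinuant a))⁻¹

section Continuants

variable {n : ℕ} (a : Fin n → ℕ+) (k : ℕ+)

lemma continuant_zero (a : Fin 0 → ℕ+) : continuant a = 1 := by simp [continuant, contQ]

lemma continuant_snoc :
    continuant (Fin.snoc a k : Fin (n + 1) → ℕ+) = k * continuant a + prevContinuant a := by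
  have init_cast (m : ℕ) (b : Fin (m + 1) → ℕ+) :
      (Fin.init fun i => (b i : ℕ)) = fun i => ((Fin.init b : Fin m → ℕ+) i : ℕ) := rfl
  cases n with
  | zero => simp [continuant, prevContinuant, contQ, Fin.snoc]
  | succ n =>
    simp only [continuant, prevContinuant, contQ, init_cast, Fin.init_snoc, Fin.snoc_last]
    push_cast
    rfl

lemma prevContinuant_snoc :
    prevContinuant (Fin.snoc a k : Fin (n + 1) → ℕ+) = continuant a := by
  simp only [prevContinuant, Fin.init_snoc]

lemma one_le_continuant_and_prevContinuant_mem_Icc :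
    1 ≤ continuant a ∧ prevContinuant a ∈ Icc 0 (continuant a) := by
  induction a using Fin.snocInduction with
  | elim0 => simp [continuant_zero, prevContinuant]
  | snoc a k ih =>
    obtain ⟨hq, hp, -⟩ := ih
    rw [continuant_snoc, prevContinuant_snoc]
    have hk := le_mul_of_one_le_left (zero_le_one.trans hq) (one_le_pnat_cast k)
    exact ⟨by linarith, by linarith, by linarith⟩

lemma one_le_continuant : 1 ≤ continuant a :=
  (one_le_continuant_and_prevContinuant_mem_Icc a).1

lemma continuant_pos : 0 < continuant a := one_pos.trans_le (one_le_continuant a)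

lemma prevContinuant_nonneg : 0 ≤ prevContinuant a :=
  (one_le_continuant_and_prevContinuant_mem_Icc a).2.1

lemma prevContinuant_le_continuant : prevContinuant a ≤ continuant a :=
  (one_le_continuant_and_prevContinuant_mem_Icc a).2.2

lemma mul_continuant_le_continuant_snoc :
    k * continuant a ≤ continuant (Fin.snoc a k : Fin (n + 1) → ℕ+) := by
  rw [continuant_snoc]
  exact le_add_of_nonneg_right (prevContinuant_nonneg a)

lemma continuant_snoc_le_two_mul :
    continuant (Fin.snoc a k : Fin (n + 1) → ℕ+) ≤ 2 * (k * continuant a) := by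
  rw [continuant_snoc]
  linarith [prevContinuant_le_continuant a,
    le_mul_of_one_le_left (continuant_pos a).le (one_le_pnat_cast k)]

lemma cylinderLength_pos : 0 < cylinderLength a :=
  inv_pos.2 (mul_pos (continuant_pos a)
    (add_pos_of_pos_of_nonneg (continuant_pos a) (prevContinuant_nonneg a)))

lemma cylinderLength_le_inv_sq_continuant : cylinderLength a ≤ (continuant a ^ 2)⁻¹ := by
  have hq := continuant_pos a
  have hp := prevContinuant_nonneg a
  rw [cylinderLength, sq]
  gcongr
  linarith

lemma inv_sq_continuant_le_two_mul_cylinderLength :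
    (continuant a ^ 2)⁻¹ ≤ 2 * cylinderLength a := by
  have hq := continuant_pos a
  have hp := prevContinuant_nonneg a
  have hpq := prevContinuant_le_continuant a
  rw [cylinderLength, ← div_eq_mul_inv, inv_eq_one_div, div_le_div_iff₀ (by positivity)
    (by positivity)]
  nlinarith

lemma cylinderLength_le_inv_two_pow : cylinderLength a ≤ (2 ^ n)⁻¹ := by
  suffices h : 2 ^ n ≤ continuant a * (continuant a + prevContinuant a) from
    inv_anti₀ (by positivity) h
  induction a using Fin.snocInduction with
  | elim0 => simp [continuant_zero, prevContinuant]
  | @snoc n a k ih =>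
    have hq := continuant_pos a
    have hp := prevContinuant_nonneg a
    have hk : continuant a + prevContinuant a ≤ continuant (Fin.snoc a k : Fin (n + 1) → ℕ+) := by
      rw [continuant_snoc]
      linarith [le_mul_of_one_le_left hq.le (one_le_pnat_cast k)]
    calc (2 : ℝ) ^ (n + 1)
        ≤ (continuant a + prevContinuant a) * (2 * continuant a) := by rw [pow_succ]; linarith
      _ ≤ _ := by
        rw [prevContinuant_snoc]
        exact mul_le_mul hk (by linarith) (by positivity) (by linarith)

lemma tsum_ofReal_cylinderLength (n : ℕ) :
    ∑' a : Fin n → ℕ+, ENNReal.ofReal (cylinderLength a) = 1 := by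
  induction n with
  | zero => simp [cylinderLength, continuant_zero, prevContinuant]
  | succ n ih =>
    rw [tsum_fin_succ_eq_tsum_tsum_snoc, ← ih]
    refine tsum_congr fun a => ?_
    simp only [cylinderLength, continuant_snoc, prevContinuant_snoc]
    exact tsum_pnat_ofReal_inv_mul_add (continuant_pos a) (prevContinuant_nonneg a)

end Continuants

/-- The `n`-th partition function `∑ (Bⁿ q_n(a)²)^(-s)` over all words `a` of length `n`. -/
noncomputable def partitionSum (B s : ℝ) (n : ℕ) : ℝ≥0∞ :=
  ∑' a : Fin n → ℕ+, ENNReal.ofReal ((B ^ n * continuant a ^ 2) ^ (-s))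

/-- The value of `partitionSum` on one-letter words, where `q_1(k) = k`: the factor by which
appending a letter changes `partitionSum`, up to a bounded multiple. -/
noncomputable def letterSum (B s : ℝ) : ℝ≥0∞ :=
  ∑' k : ℕ+, ENNReal.ofReal ((B * (k : ℝ) ^ 2) ^ (-s))

/-- The pressure `P(T, -s log |T'| - s log B)` of the Gauss map `T`, as the exponential growth
rate of `partitionSum`. -/
noncomputable def pressure (B s : ℝ) : EReal := expGrowthSup (partitionSum B s)

/-- The exponents `s ≥ 0` of nonpositive pressure, whose infimum is `s_B`. -/
def pressureSet (B : ℝ) : Set ℝ := {s | 0 ≤ s ∧ pressure B s ≤ 0}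

lemma sExp_eq_sInf_pressureSet (B : ℝ) : sExp B = sInf (pressureSet B) := by
  have hpressure (s : ℝ) : pressure B s = atTop.limsup fun n : ℕ =>
      (((n : ℝ)⁻¹ : ℝ) : EReal) * ENNReal.log (partitionSum B s n) := by
    refine congrArg (limsup · atTop) (funext fun n => ?_)
    rw [EReal.coe_inv, mul_comm]
    rfl
  simp only [pressureSet, hpressure]
  rfl

section Pressure

variable {B s : ℝ}

lemma letterSum_eq_mul (hB : 0 ≤ B) : letterSum B s =
    ENNReal.ofReal (B ^ (-s)) * ∑' k : ℕ+, ENNReal.ofReal ((k : ℝ) ^ (-(2 * s))) := by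
  rw [letterSum, ← ENNReal.tsum_mul_left]
  refine tsum_congr fun k => ?_
  rw [← ENNReal.ofReal_mul (by positivity), Real.mul_rpow hB (by positivity),
    ← Real.rpow_natCast_mul (by positivity), mul_neg, Nat.cast_ofNat]

lemma letterSum_eq_top (hB : 0 < B) (hs : s ≤ 1 / 2) : letterSum B s = ∞ := by
  rw [letterSum_eq_mul hB.le, tsum_pnat_ofReal_rpow_eq_top_iff.2 (by linarith)]
  exact ENNReal.mul_top (ENNReal.ofReal_pos.2 (by positivity)).ne'

lemma tendsto_letterSum_atTop (hs : 1 / 2 < s) : Tendsto (letterSum · s) atTop (𝓝 0) := by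
  have hpow : Tendsto (fun B : ℝ => ENNReal.ofReal (B ^ (-s))) atTop (𝓝 0) := by
    simpa only [ENNReal.ofReal_zero] using
      ENNReal.tendsto_ofReal (tendsto_rpow_neg_atTop (by linarith : 0 < s))
  have hzeta : ∑' k : ℕ+, ENNReal.ofReal ((k : ℝ) ^ (-(2 * s))) ≠ ∞ :=
    mt tsum_pnat_ofReal_rpow_eq_top_iff.1 (by linarith)
  have hmul := ENNReal.Tendsto.mul_const hpow (Or.inr hzeta)
  rw [zero_mul] at hmul
  refine hmul.congr' ?_
  filter_upwards [eventually_ge_atTop 0] with B hB using (letterSum_eq_mul hB).symm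

lemma partitionSum_zero : partitionSum B s 0 = 1 := by simp [partitionSum, continuant_zero]

lemma partitionSum_ne_zero (hB : 0 < B) (n : ℕ) : partitionSum B s n ≠ 0 := by
  refine ENNReal.tsum_eq_zero.not.2 fun h => ?_
  have hq := continuant_pos (fun _ : Fin n => 1)
  exact (ENNReal.ofReal_pos.2 (by positivity)).ne' (h fun _ => 1)

lemma partitionSum_mul_letterSum (n : ℕ) (hB : 0 ≤ B) : partitionSum B s n * letterSum B s =
    ∑' (a : Fin n → ℕ+) (k : ℕ+),
      ENNReal.ofReal ((B ^ (n + 1) * (k * continuant a) ^ 2) ^ (-s)) := by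
  rw [partitionSum, letterSum, ← ENNReal.tsum_mul_right]
  refine tsum_congr fun a => ?_
  rw [← ENNReal.tsum_mul_left]
  refine tsum_congr fun k => ?_
  rw [← ENNReal.ofReal_mul (by positivity), ← Real.mul_rpow (by positivity) (by positivity)]
  ring_nf

lemma partitionSum_succ_le (hB : 0 < B) (hs : 0 ≤ s) (n : ℕ) :
    partitionSum B s (n + 1) ≤ partitionSum B s n * letterSum B s := by
  rw [partitionSum_mul_letterSum n hB.le, partitionSum, tsum_fin_succ_eq_tsum_tsum_snoc]
  refine ENNReal.tsum_le_tsum fun a => ENNReal.tsum_le_tsum fun k => ENNReal.ofReal_le_ofReal ?_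
  have hq := continuant_pos a
  refine Real.rpow_le_rpow_of_nonpos (by positivity) ?_ (neg_nonpos.2 hs)
  gcongr
  exact mul_continuant_le_continuant_snoc a k

lemma four_rpow_neg_mul_le_partitionSum_succ (hB : 0 < B) (hs : 0 ≤ s) (n : ℕ) :
    ENNReal.ofReal (4 ^ (-s)) * (partitionSum B s n * letterSum B s) ≤
      partitionSum B s (n + 1) := by
  rw [partitionSum_mul_letterSum n hB.le, partitionSum, tsum_fin_succ_eq_tsum_tsum_snoc,
    ← ENNReal.tsum_mul_left]
  refine ENNReal.tsum_le_tsum fun a => ?_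
  rw [← ENNReal.tsum_mul_left]
  refine ENNReal.tsum_le_tsum fun k => ?_
  have hq := continuant_pos a
  have hqk := continuant_pos (Fin.snoc a k : Fin (n + 1) → ℕ+)
  rw [← ENNReal.ofReal_mul (by positivity), ← Real.mul_rpow (by positivity) (by positivity)]
  refine ENNReal.ofReal_le_ofReal (Real.rpow_le_rpow_of_nonpos (by positivity) ?_ (neg_nonpos.2 hs))
  calc B ^ (n + 1) * continuant (Fin.snoc a k : Fin (n + 1) → ℕ+) ^ 2
      ≤ B ^ (n + 1) * (2 * (k * continuant a)) ^ 2 := by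
        gcongr
        exact continuant_snoc_le_two_mul a k
    _ = 4 * (B ^ (n + 1) * (k * continuant a) ^ 2) := by ring

lemma pressure_le_log_letterSum (hB : 0 < B) (hs : 0 ≤ s) :
    pressure B s ≤ ENNReal.log (letterSum B s) := by
  rw [← ExpGrowth.expGrowthSup_pow]
  refine ExpGrowth.expGrowthSup_monotone fun n => ?_
  induction n with
  | zero => rw [partitionSum_zero, pow_zero]
  | succ n ih => exact (partitionSum_succ_le hB hs n).trans (by rw [pow_succ]; gcongr)

lemma pressure_eq_top (hB : 0 < B) (hs₀ : 0 ≤ s) (hs : s ≤ 1 / 2) : pressure B s = ⊤ := by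
  rw [pressure, ← ExpGrowth.expGrowthSup_top]
  refine ExpGrowth.expGrowthSup_congr ?_
  filter_upwards [eventually_ne_atTop 0] with n hn
  obtain ⟨m, rfl⟩ := Nat.exists_eq_succ_of_ne_zero hn
  have hle := four_rpow_neg_mul_le_partitionSum_succ hB hs₀ m
  rwa [letterSum_eq_top hB hs, ENNReal.mul_top (partitionSum_ne_zero hB m),
    ENNReal.mul_top (ENNReal.ofReal_pos.2 (by positivity)).ne', top_le_iff] at hle

lemma pressure_one_nonpos (hB : 1 ≤ B) : pressure B 1 ≤ 0 := by
  rw [← ExpGrowth.expGrowthSup_const two_ne_zero ENNReal.ofNat_ne_top]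
  refine ExpGrowth.expGrowthSup_monotone fun n => ?_
  calc partitionSum B 1 n
      ≤ ∑' a : Fin n → ℕ+, ENNReal.ofReal (2 * cylinderLength a) := by
        refine ENNReal.tsum_le_tsum fun a => ENNReal.ofReal_le_ofReal ?_
        have hq := continuant_pos a
        rw [Real.rpow_neg_one]
        refine le_trans (inv_anti₀ (by positivity) ?_)
          (inv_sq_continuant_le_two_mul_cylinderLength a)
        exact le_mul_of_one_le_left (by positivity) (one_le_pow₀ hB)
    _ = 2 := by
        simp only [ENNReal.ofReal_mul zero_le_two, ENNReal.tsum_mul_left,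
          tsum_ofReal_cylinderLength, mul_one, ENNReal.ofReal_ofNat]

lemma rpow_mul_cylinderLength_le (hB : 0 < B) (hs₀ : 0 ≤ s) (hs₁ : s ≤ 1) {n : ℕ}
    (a : Fin n → ℕ+) :
    (B ^ (-s) * 2 ^ (1 - s)) ^ n * cylinderLength a ≤ (B ^ n * continuant a ^ 2) ^ (-s) := by
  have hℓ := cylinderLength_pos a
  have hq := continuant_pos a
  have htwo : ((2 : ℝ) ^ (1 - s)) ^ n ≤ cylinderLength a ^ (s - 1) := by
    rw [Real.rpow_pow_comm zero_le_two, ← neg_sub 1 s, Real.rpow_neg hℓ.le,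
      ← Real.inv_rpow hℓ.le]
    exact Real.rpow_le_rpow (by positivity)
      (le_inv_of_le_inv₀ hℓ (cylinderLength_le_inv_two_pow a)) (sub_nonneg.2 hs₁)
  calc (B ^ (-s) * 2 ^ (1 - s)) ^ n * cylinderLength a
      = (B ^ n) ^ (-s) * (((2 : ℝ) ^ (1 - s)) ^ n * cylinderLength a) := by
        rw [mul_pow, Real.rpow_pow_comm hB.le, mul_assoc]
    _ ≤ (B ^ n) ^ (-s) * (cylinderLength a ^ (s - 1) * cylinderLength a) := by gcongr
    _ = (B ^ n) ^ (-s) * cylinderLength a ^ s := by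
        rw [← Real.rpow_add_one hℓ.ne', sub_add_cancel]
    _ ≤ (B ^ n) ^ (-s) * ((continuant a ^ 2)⁻¹) ^ s := by
        gcongr
        exact cylinderLength_le_inv_sq_continuant a
    _ = (B ^ n * continuant a ^ 2) ^ (-s) := by
        rw [Real.mul_rpow (by positivity) (by positivity), Real.inv_rpow (by positivity),
          Real.rpow_neg (x := continuant a ^ 2) (by positivity)]

lemma one_sub_mul_log_two_sub_mul_log_le_pressure (hB : 0 < B) (hs₀ : 0 ≤ s) (hs₁ : s ≤ 1) :
    (((1 - s) * Real.log 2 - s * Real.log B : ℝ) : EReal) ≤ pressure B s := by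
  have hbase : 0 < B ^ (-s) * 2 ^ (1 - s) := by positivity
  have hlog : Real.log (B ^ (-s) * 2 ^ (1 - s)) = (1 - s) * Real.log 2 - s * Real.log B := by
    rw [Real.log_mul (by positivity) (by positivity), Real.log_rpow hB, Real.log_rpow two_pos]
    ring
  rw [← hlog, ← ENNReal.log_ofReal_of_pos hbase, ← ExpGrowth.expGrowthSup_pow]
  refine ExpGrowth.expGrowthSup_monotone fun n => ?_
  rw [← mul_one (_ ^ n), ← tsum_ofReal_cylinderLength n, ← ENNReal.tsum_mul_left]
  refine ENNReal.tsum_le_tsum fun a => ?_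
  rw [← ENNReal.ofReal_pow hbase.le, ← ENNReal.ofReal_mul (by positivity)]
  exact ENNReal.ofReal_le_ofReal (rpow_mul_cylinderLength_le hB hs₀ hs₁ a)

lemma pressure_le_pressure_of_mul_log_le {B' t : ℝ} (hB : 0 < B) (hB' : 0 < B') (hst : s ≤ t)
    (hlog : s * Real.log B ≤ t * Real.log B') : pressure B' t ≤ pressure B s := by
  refine ExpGrowth.expGrowthSup_monotone fun n => ENNReal.tsum_le_tsum fun a =>
    ENNReal.ofReal_le_ofReal ?_
  have hq := continuant_pos a
  have hpow : (B' ^ n) ^ (-t) ≤ (B ^ n) ^ (-s) := by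
    rw [← Real.rpow_pow_comm hB'.le, ← Real.rpow_pow_comm hB.le, Real.rpow_def_of_pos hB',
      Real.rpow_def_of_pos hB]
    gcongr ?_ ^ n
    exact Real.exp_le_exp.2 (by linarith)
  rw [Real.mul_rpow (by positivity) (by positivity), Real.mul_rpow (by positivity) (by positivity)]
  gcongr
  exact one_le_pow₀ (one_le_continuant a)

end Pressure

section PressureExponent

variable {B : ℝ}

lemma one_mem_pressureSet (hB : 1 ≤ B) : 1 ∈ pressureSet B :=
  ⟨zero_le_one, pressure_one_nonpos hB⟩

lemma sExp_le_of_mem_pressureSet {s : ℝ} (hs : s ∈ pressureSet B) : sExp B ≤ s := by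
  rw [sExp_eq_sInf_pressureSet]
  exact csInf_le ⟨0, fun _ ht => ht.1⟩ hs

lemma le_sExp_of_forall_mem_pressureSet {x : ℝ} (hB : 1 ≤ B) (h : ∀ s ∈ pressureSet B, x ≤ s) :
    x ≤ sExp B := by
  rw [sExp_eq_sInf_pressureSet]
  exact le_csInf ⟨1, one_mem_pressureSet hB⟩ h

lemma sExp_le_one (hB : 1 ≤ B) : sExp B ≤ 1 := sExp_le_of_mem_pressureSet (one_mem_pressureSet hB)

lemma half_le_sExp (hB : 1 ≤ B) : 1 / 2 ≤ sExp B := by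
  refine le_sExp_of_forall_mem_pressureSet hB fun s hs => le_of_not_ge fun hhalf => ?_
  have htop := pressure_eq_top (one_pos.trans_le hB) hs.1 hhalf
  exact not_le_of_gt EReal.zero_lt_top (htop ▸ hs.2)

lemma log_two_div_log_two_mul_le_sExp (hB : 1 ≤ B) :
    Real.log 2 / Real.log (2 * B) ≤ sExp B := by
  have hB₀ : 0 < B := one_pos.trans_le hB
  have hlogB : 0 ≤ Real.log B := Real.log_nonneg hB
  have hlog2 : 0 < Real.log 2 := Real.log_pos one_lt_two
  refine le_sExp_of_forall_mem_pressureSet hB fun s hs => ?_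
  rw [Real.log_mul two_ne_zero hB₀.ne', div_le_iff₀ (by positivity)]
  rcases le_total s 1 with hs₁ | hs₁
  · have hnonpos : (1 - s) * Real.log 2 - s * Real.log B ≤ 0 := by
      exact_mod_cast (one_sub_mul_log_two_sub_mul_log_le_pressure hB₀ hs.1 hs₁).trans hs.2
    linarith
  · nlinarith

lemma antitoneOn_sExp : AntitoneOn sExp (Ici 1) := by
  intro B hB B' _ hle
  have hB₀ : 0 < B := one_pos.trans_le hB
  refine le_sExp_of_forall_mem_pressureSet hB fun s hs => sExp_le_of_mem_pressureSet ⟨hs.1, ?_⟩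
  refine (pressure_le_pressure_of_mul_log_le hB₀ (hB₀.trans_le hle) le_rfl ?_).trans hs.2
  exact mul_le_mul_of_nonneg_left (Real.log_le_log hB₀ hle) hs.1

lemma monotoneOn_sExp_mul_log : MonotoneOn (fun B => sExp B * Real.log B) (Ioi 1) := by
  intro B (hB : 1 < B) B' (hB' : 1 < B') hle
  have hlog : 0 < Real.log B := Real.log_pos hB
  have hlog' : 0 < Real.log B' := Real.log_pos hB'
  have hloglog : Real.log B ≤ Real.log B' := Real.log_le_log (by linarith) hle
  suffices h : sExp B * Real.log B / Real.log B' ≤ sExp B' from (div_le_iff₀ hlog').1 h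
  refine le_sExp_of_forall_mem_pressureSet hB'.le fun s hs => ?_
  rw [div_le_iff₀ hlog', ← le_div_iff₀ hlog]
  have hs_le : s ≤ s * Real.log B' / Real.log B := by
    rw [le_div_iff₀ hlog]
    exact mul_le_mul_of_nonneg_left hloglog hs.1
  refine sExp_le_of_mem_pressureSet ⟨hs.1.trans hs_le, ?_⟩
  refine (pressure_le_pressure_of_mul_log_le (by linarith) (by linarith) hs_le ?_).trans hs.2
  rw [div_mul_cancel₀ _ hlog.ne']

lemma continuousOn_sExp : ContinuousOn sExp (Ioi 1) :=
  continuousOn_of_antitoneOn_of_monotoneOn_mul (antitoneOn_sExp.mono Ioi_subset_Ici_self)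
    monotoneOn_sExp_mul_log
    (Real.continuousOn_log.mono fun _ hB => (one_pos.trans hB).ne') fun _ => Real.log_pos

lemma tendsto_sExp_nhdsGT_one : Tendsto sExp (𝓝[>] 1) (𝓝 1) := by
  have hlower : Tendsto (fun B => Real.log 2 / Real.log (2 * B)) (𝓝[>] 1) (𝓝 1) := by
    have hlog2 : Real.log 2 ≠ 0 := (Real.log_pos one_lt_two).ne'
    have hcont : ContinuousAt (fun B => Real.log 2 / Real.log (2 * B)) 1 := by
      fun_prop (disch := simp [hlog2])
    simpa [hlog2] using hcont.tendsto.mono_left nhdsWithin_le_nhds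
  refine tendsto_of_tendsto_of_tendsto_of_le_of_le' hlower tendsto_const_nhds ?_ ?_
  · filter_upwards [self_mem_nhdsWithin] with B hB
    exact log_two_div_log_two_mul_le_sExp (le_of_lt hB)
  · filter_upwards [self_mem_nhdsWithin] with B hB using sExp_le_one (le_of_lt hB)

lemma tendsto_sExp_atTop : Tendsto sExp atTop (𝓝 (1 / 2)) := by
  refine tendsto_order.2 ⟨fun x hx => ?_, fun x hx => ?_⟩
  · filter_upwards [eventually_ge_atTop 1] with B hB using hx.trans_le (half_le_sExp hB)
  · obtain ⟨s, hs, hsx⟩ := exists_between hx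
    have hs₀ : 0 ≤ s := by linarith
    filter_upwards [eventually_gt_atTop 0,
      (tendsto_letterSum_atTop hs).eventually (ge_mem_nhds zero_lt_one)] with B hB hletter
    refine (sExp_le_of_mem_pressureSet ⟨hs₀, ?_⟩).trans_lt hsx
    exact (pressure_le_log_letterSum hB hs₀).trans (ENNReal.log_le_zero_iff.2 hletter)

end PressureExponent

theorem sExp_continuous_and_limits :
    ContinuousOn sExp (Set.Ioi (1 : ℝ)) ∧
    Filter.Tendsto sExp (nhdsWithin 1 (Set.Ioi (1 : ℝ))) (nhds 1) ∧
    Filter.Tendsto sExp Filter.atTop (nhds (1 / 2)) :=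
  ⟨continuousOn_sExp, tendsto_sExp_nhdsGT_one, tendsto_sExp_atTop⟩
end
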